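/- Let f ∈ C_b^4(ℝ^d) be a bounded probability density and let K be a spherically symmetric kernel on ℝ^d satisfying (K0)–(K2), K(z) = κ(‖z‖). Let Z have density K, R := ‖Z‖, b := E(R⁴)/(E(R⁶) − E(R⁴)²/d), a := 1 + b E(R⁴)/d, and set p_j(z) := a z_j − b ‖z‖² z_j. Fix x_o ∈ ℝ^d. Then for each j ∈ {1,…,d} and all sequences h_n → 0+, x_n → x_o, ∫ K(z) p_j(z) f(x_n + h_n z) dz = h_n f^{(e_j)}(x_n) + o(h_n⁴). -/

import Mathlib

open MeasureTheory Filter Topology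

noncomputable section

/-- `ℝ^d` as a pi type; `volume` is `d`-dimensional Lebesgue measure. -/
abbrev Vec (d : ℕ) := Fin d → ℝ

/-- The Euclidean norm on `ℝ^d`. -/
def euclNorm {d : ℕ} (z : Vec d) : ℝ := Real.sqrt (∑ i, z i ^ 2)

lemma euclNorm_eq {d : ℕ} (z : Vec d) : euclNorm z = ‖(WithLp.toLp 2 z : EuclideanSpace ℝ (Fin d))‖ := by
  rw [EuclideanSpace.norm_eq]
  simp [euclNorm]

lemma euclNorm_nonneg {d : ℕ} (z : Vec d) : 0 ≤ euclNorm z := Real.sqrt_nonneg _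

lemma euclNorm_sq {d : ℕ} (z : Vec d) : euclNorm z ^ 2 = ∑ i, z i ^ 2 :=
  Real.sq_sqrt (Finset.sum_nonneg fun i _ => sq_nonneg _)

lemma euclNorm_neg {d : ℕ} (z : Vec d) : euclNorm (-z) = euclNorm z := by
  simp [euclNorm]

lemma euclNorm_cont {d : ℕ} : Continuous (euclNorm : Vec d → ℝ) := by
  unfold euclNorm; fun_prop

lemma abs_le_euclNorm {d : ℕ} (z : Vec d) (i : Fin d) : |z i| ≤ euclNorm z := by
  rw [← Real.sqrt_sq_eq_abs]
  exact Real.sqrt_le_sqrt (Finset.single_le_sum (f := fun i => z i ^ 2)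
    (fun i _ => sq_nonneg _) (Finset.mem_univ i))

lemma norm_le_euclNorm {d : ℕ} (z : Vec d) : ‖z‖ ≤ euclNorm z :=
  (pi_norm_le_iff_of_nonneg (euclNorm_nonneg z)).2 fun i => abs_le_euclNorm z i

lemma euclNorm_null {d : ℕ} (hd : 1 ≤ d) (r : ℝ) : volume {z : Vec d | euclNorm z = r} = 0 := by
  have : Nonempty (Fin d) := ⟨⟨0, hd⟩⟩
  have h1 : {z : Vec d | euclNorm z = r} =
      (WithLp.toLp 2) ⁻¹' (Metric.sphere (0 : EuclideanSpace ℝ (Fin d)) r) := by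
    ext z; simp [euclNorm_eq]
  rw [h1, (PiLp.volume_preserving_toLp (Fin d)).measure_preimage
    Metric.isClosed_sphere.measurableSet.nullMeasurableSet]
  exact Measure.addHaar_sphere _ _ _

lemma radial_aux {d : ℕ} (hd : 1 ≤ d) (P : Vec d → ℝ) (k : ℕ)
    (hP : ∀ t : ℝ, 0 < t → ∀ z, P (t • z) = t ^ k * P z) (γ : ℝ → ℝ) :
    ∫ z : Vec d, γ (euclNorm z) * P z =
    (∫ θ, P (WithLp.ofLp θ.1) ∂(volume : Measure (EuclideanSpace ℝ (Fin d))).toSphere) *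
      ∫ r, γ r.1 * r.1 ^ k ∂(Measure.volumeIoiPow (Module.finrank ℝ (EuclideanSpace ℝ (Fin d)) - 1)) := by
  have : Nonempty (Fin d) := ⟨⟨0, hd⟩⟩
  set E := EuclideanSpace ℝ (Fin d)
  let μ : Measure E := volume
  have e1 : ∫ z : Vec d, γ (euclNorm z) * P z = ∫ z : E, γ ‖z‖ * P (WithLp.ofLp z) := by
    rw [← (PiLp.volume_preserving_toLp (Fin d)).integral_comp
      (MeasurableEquiv.toLp 2 (Fin d → ℝ)).measurableEmbedding]
    simp [euclNorm_eq]
  rw [e1, ← integral_prod_mul]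
  calc
    ∫ z : E, γ ‖z‖ * P (WithLp.ofLp z)
      = ∫ z : ({(0)}ᶜ : Set E), γ ‖z.1‖ * P (WithLp.ofLp z.1) ∂(μ.comap (↑)) := by
      rw [integral_subtype_comap (measurableSet_singleton _).compl
        fun z : E => γ ‖z‖ * P (WithLp.ofLp z), restrict_compl_singleton]
    _ = _ := by
      rw [← μ.measurePreserving_homeomorphUnitSphereProd.integral_comp
        (Homeomorph.measurableEmbedding _)]
      congr 1
      ext z
      have hz : 0 < ‖z.1‖ := norm_pos_iff.2 z.2
      have h2 := hP ‖z.1‖ hz (WithLp.ofLp ((‖z.1‖)⁻¹ • z.1))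
      rw [← WithLp.ofLp_smul, smul_smul, mul_inv_cancel₀ hz.ne', one_smul] at h2
      rw [h2]
      simp
      ring

lemma radial {d : ℕ} (hd : 1 ≤ d) (P : Vec d → ℝ) (k : ℕ)
    (hP : ∀ t : ℝ, 0 < t → ∀ z, P (t • z) = t ^ k * P z) :
    ∃ s : ℝ, ∀ γ : ℝ → ℝ, ∫ z : Vec d, γ (euclNorm z) * P z =
      s * ∫ z : Vec d, γ (euclNorm z) * euclNorm z ^ k := by
  have : Nonempty (Fin d) := ⟨⟨0, hd⟩⟩
  let μ : Measure (EuclideanSpace ℝ (Fin d)) := volume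
  refine ⟨(∫ θ, P (WithLp.ofLp θ.1) ∂μ.toSphere) / μ.toSphere.real Set.univ, fun γ => ?_⟩
  rw [radial_aux hd P k hP, radial_aux hd (fun z => euclNorm z ^ k) k]
  · have h1 : ∀ θ : Metric.sphere (0 : EuclideanSpace ℝ (Fin d)) 1,
        euclNorm (WithLp.ofLp θ.1) ^ k = 1 := by
      intro θ
      rw [euclNorm_eq]; simp
    simp only [h1]
    have h2 : μ.toSphere.real Set.univ ≠ 0 := by
      have := Measure.toSphere_ne_zero μ
      simp [Measure.real, ENNReal.toReal_eq_zero_iff, -Measure.toSphere_apply_univ, Measure.measure_univ_eq_zero, this]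
    rw [integral_const, smul_eq_mul, mul_one]
    change _ = _ / μ.toSphere.real Set.univ * (μ.toSphere.real Set.univ * _)
    field_simp; rw [mul_comm]
  · intro t ht z
    rw [euclNorm_eq, euclNorm_eq, WithLp.toLp_smul, norm_smul, Real.norm_of_nonneg ht.le, mul_pow]

lemma line_iter {d : ℕ} (f : Vec d → ℝ) (hf : ContDiff ℝ (4 : ℕ∞) f) (x v : Vec d) (k : ℕ) (hk : k ≤ 4) :
    iteratedDeriv k (fun t : ℝ => f (x + t • v)) =
      fun t => iteratedFDeriv ℝ k f (x + t • v) (fun _ => v) := by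
  induction k with
  | zero => ext t; simp
  | succ k ih =>
    rw [iteratedDeriv_succ, ih (by omega)]
    ext t
    rw [iteratedFDeriv_succ_apply_left]
    have hd : DifferentiableAt ℝ (iteratedFDeriv ℝ k f) (x + t • v) :=
      (hf.differentiable_iteratedFDeriv (by exact_mod_cast (by omega : k < 4))).differentiableAt
    have h1 : HasDerivAt (fun t : ℝ => x + t • v) v t := by
      simpa using ((hasDerivAt_id t).smul_const v).const_add x
    have h2 := hd.hasFDerivAt.comp_hasDerivAt t h1
    have h3 := ((ContinuousMultilinearMap.apply ℝ (fun _ : Fin k => Vec d) ℝ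
      (fun _ => v)).hasFDerivAt).comp_hasDerivAt t h2
    exact h3.deriv

lemma taylor4 {d : ℕ} (f : Vec d → ℝ) (hf : ContDiff ℝ (4 : ℕ∞) f) (x v : Vec d) (h : ℝ) (hh : 0 < h) :
    ∃ t ∈ Set.Ioo 0 h, f (x + h • v) = f x + h * fderiv ℝ f x v
      + h ^ 2 / 2 * iteratedFDeriv ℝ 2 f x (fun _ => v)
      + h ^ 3 / 6 * iteratedFDeriv ℝ 3 f x (fun _ => v)
      + h ^ 4 / 24 * iteratedFDeriv ℝ 4 f (x + t • v) (fun _ => v) := by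
  have hc : ContDiff ℝ 4 (fun t : ℝ => f (x + t • v)) := by
    have : ContDiff ℝ 4 f := by exact_mod_cast hf
    exact this.comp (by fun_prop)
  obtain ⟨t, ht, h1⟩ := taylor_mean_remainder_lagrange_iteratedDeriv (f := fun t : ℝ => f (x + t • v))
    (x := h) (x₀ := 0) (n := 3) hh.ne (by norm_num; exact hc.contDiffOn)
  rw [Set.uIoo_of_le hh.le] at ht
  refine ⟨t, ht, ?_⟩
  have key : ∀ k : ℕ, k ≤ 4 → iteratedDerivWithin k (fun t : ℝ => f (x + t • v)) (Set.uIcc 0 h) 0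
      = iteratedFDeriv ℝ k f x (fun _ => v) := by
    intro k hk
    rw [iteratedDerivWithin_eq_iteratedDeriv (uniqueDiffOn_uIcc hh.ne)
      ((hc.of_le (by exact_mod_cast hk)).contDiffAt) (by simp), line_iter f hf x v k hk]
    simp
  simp only [taylorWithinEval_succ, taylor_within_zero_eval] at h1
  rw [key _ (by norm_num), key _ (by norm_num), key _ (by norm_num), line_iter f hf x v _ (by norm_num)] at h1
  simp [Nat.factorial] at h1
  have h1' : iteratedFDeriv ℝ 1 f x (fun _ => v) = fderiv ℝ f x v := by
    simp [iteratedFDeriv_one_apply]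
  try rw [h1'] at h1
  linarith

theorem statement6 {d : ℕ} (hd : 1 ≤ d)
    (f : Vec d → ℝ) (hf : ContDiff ℝ (4 : ℕ∞) f)
    (hfb : ∀ n : ℕ, n ≤ 4 → ∃ C : ℝ, ∀ x : Vec d, ‖iteratedFDeriv ℝ n f x‖ ≤ C)
    (hfpos : ∀ x, 0 ≤ f x) (hfint : (∫ x : Vec d, f x) = 1)
    (K : Vec d → ℝ) (hKmeas : Measurable K) (hKpos : ∀ z, 0 ≤ K z)
    (hKbd : ∃ C : ℝ, ∀ z, K z ≤ C)
    (hKmom : ∀ r : ℝ, 0 < r → Integrable (fun z => K z * euclNorm z ^ r))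
    (hK0 : (∫ z : Vec d, K z) = 1)
    (hK1 : ∃ κ : ℝ → ℝ, (∀ t, 0 ≤ κ t) ∧ ∀ z : Vec d, K z = κ (euclNorm z))
    (hK2 : ∀ i j : Fin d, (∫ z : Vec d, K z * z i * z j) = if i = j then 1 else 0)
    (m4 m6 a b : ℝ)
    (hm4 : m4 = ∫ z : Vec d, K z * euclNorm z ^ 4)
    (hm6 : m6 = ∫ z : Vec d, K z * euclNorm z ^ 6)
    (hb : b = m4 / (m6 - m4 ^ 2 / d))
    (ha : a = 1 + b * m4 / d)
    (x_o : Vec d) (h : ℕ → ℝ) (hh : ∀ n, 0 < h n) (hh0 : Tendsto h atTop (𝓝 0))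
    (x : ℕ → Vec d) (hx : Tendsto x atTop (𝓝 x_o)) :
    ∀ j : Fin d, Tendsto
      (fun n => ((∫ z : Vec d, K z * (a * z j - b * euclNorm z ^ 2 * z j) *
          f (x n + h n • z)) - h n * fderiv ℝ f (x n) (Pi.single j 1)) / h n ^ 4)
      atTop (𝓝 0) := by
  intro j
  obtain ⟨κ, -, hκ⟩ := hK1
  have hd0 : (d : ℝ) ≠ 0 := by positivity
  have mom : ∀ k : ℕ, 0 < k → Integrable (fun z => K z * euclNorm z ^ k) := by
    intro k hk
    simpa using hKmom k (by exact_mod_cast hk)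
  have hzz : ∀ i l : Fin d, Integrable (fun z : Vec d => K z * z i * z l) := by
    intro i l
    refine (mom 2 (by norm_num)).mono (by fun_prop) (Eventually.of_forall fun z => ?_)
    rw [norm_mul, norm_mul, norm_mul, norm_pow, mul_assoc, Real.norm_of_nonneg (euclNorm_nonneg z), sq]
    gcongr
    · exact euclNorm_nonneg z
    · exact abs_le_euclNorm z i
    · exact abs_le_euclNorm z l
  -- second moment
  have m2 : ∫ z : Vec d, K z * euclNorm z ^ 2 = d := by
    have : ∀ z : Vec d, K z * euclNorm z ^ 2 = ∑ i, K z * z i * z i := by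
      intro z
      rw [euclNorm_sq, Finset.mul_sum]
      exact Finset.sum_congr rfl fun i _ => by ring
    simp only [this]
    rw [integral_finsetSum _ fun i _ => hzz i i]
    simp [hK2]
  -- nondegeneracy
  have hpos : m6 - m4 ^ 2 / d ≠ 0 := by
    intro h0
    set c := m4 / d with hc
    have e : ∫ z : Vec d, K z * (euclNorm z ^ 2 * (euclNorm z ^ 2 - c) ^ 2) = 0 := by
      have : ∀ z : Vec d, K z * (euclNorm z ^ 2 * (euclNorm z ^ 2 - c) ^ 2) =
          (K z * euclNorm z ^ 6 - (2 * c) * (K z * euclNorm z ^ 4)) + c ^ 2 * (K z * euclNorm z ^ 2) := by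
        intro z; ring
      simp only [this]
      rw [integral_add, integral_sub, integral_const_mul, integral_const_mul, ← hm4, ← hm6, m2]
      · rw [← h0, hc]; field_simp; ring
      · exact mom 6 (by norm_num)
      · exact (mom 4 (by norm_num)).const_mul _
      · exact (mom 6 (by norm_num)).sub ((mom 4 (by norm_num)).const_mul _)
      · exact (mom 2 (by norm_num)).const_mul _
    have hi : Integrable (fun z : Vec d => K z * (euclNorm z ^ 2 * (euclNorm z ^ 2 - c) ^ 2)) := by
      have := ((mom 6 (by norm_num)).sub ((mom 4 (by norm_num)).const_mul (2 * c))).add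
        ((mom 2 (by norm_num)).const_mul (c ^ 2))
      refine this.congr (Eventually.of_forall fun z => ?_)
      simp only [Pi.add_apply, Pi.sub_apply]; ring
    rw [integral_eq_zero_iff_of_nonneg
      (fun z => mul_nonneg (hKpos z) (by positivity)) hi] at e
    have n1 : ∀ᵐ z : Vec d, euclNorm z ≠ 0 := by
      have := euclNorm_null hd 0
      simpa [ae_iff] using this
    have n2 : ∀ᵐ z : Vec d, euclNorm z ≠ Real.sqrt c := by
      have := euclNorm_null hd (Real.sqrt c)
      simpa [ae_iff] using this
    have hz : K =ᵐ[volume] 0 := by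
      filter_upwards [e, n1, n2] with z h1 h2 h3
      simp only [Pi.zero_apply, mul_eq_zero, pow_eq_zero_iff, ne_eq, OfNat.ofNat_ne_zero,
        not_false_eq_true] at h1 ⊢
      rcases h1 with h1 | h1 | h1
      · exact h1
      · exact absurd h1 h2
      · exfalso; apply h3
        rw [← sub_eq_zero.1 h1, Real.sqrt_sq (euclNorm_nonneg z)]
    rw [integral_congr_ae hz] at hK0
    simp at hK0
  have hab : a * m4 - b * m6 = 0 := by
    have : b * (m6 - m4 ^ 2 / d) = m4 := by rw [hb]; exact div_mul_cancel₀ _ hpos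
    rw [ha]; linear_combination -this
  set W : Vec d → ℝ := fun z => K z * (a * z j - b * euclNorm z ^ 2 * z j) with hW
  let γ : ℝ → ℝ := fun r => κ r * (a - b * r ^ 2)
  have hWγ : ∀ z, W z = γ (euclNorm z) * z j := by
    intro z; simp only [hW, γ, hκ]; ring
  have hcont := euclNorm_cont (d := d)
  have hWm : Measurable W := by
    have := hcont.measurable
    fun_prop
  have iW : ∀ (F : Vec d → ℝ) (C : ℝ) (k : ℕ), AEStronglyMeasurable F →
      (∀ z, |F z| ≤ C * euclNorm z ^ k) → Integrable (fun z => W z * F z) := by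
    intro F C k hF hb
    have h1 := ((mom (k + 1) (by omega)).const_mul (|a| * C)).add
      ((mom (k + 3) (by omega)).const_mul (|b| * C))
    refine h1.mono' (hWm.aestronglyMeasurable.mul hF) (Eventually.of_forall fun z => ?_)
    have e1 := abs_le_euclNorm z j
    have e0 := euclNorm_nonneg z
    have e2 : |a * z j - b * euclNorm z ^ 2 * z j| ≤ (|a| + |b| * euclNorm z ^ 2) * euclNorm z := by
      rw [← sub_mul, abs_mul]
      gcongr
      refine (abs_sub _ _).trans ?_
      rw [abs_mul, abs_of_nonneg (by positivity : 0 ≤ euclNorm z ^ 2)]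
    simp only [hW, Pi.add_apply, Real.norm_eq_abs]
    rw [abs_mul, abs_mul, abs_of_nonneg (hKpos z)]
    calc K z * |a * z j - b * euclNorm z ^ 2 * z j| * |F z|
        ≤ K z * ((|a| + |b| * euclNorm z ^ 2) * euclNorm z) * (C * euclNorm z ^ k) := by
          have := hKpos z
          gcongr
          exact hb z
      _ = _ := by ring
  have odd : ∀ F : Vec d → ℝ, (∀ z, F (-z) = F z) → ∫ z, W z * F z = 0 := by
    intro F hF
    have h1 := integral_neg_eq_self (fun z => W z * F z) (volume : Measure (Vec d))
    have h2 : ∀ z, W (-z) * F (-z) = -(W z * F z) := by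
      intro z; rw [hWγ, hWγ, hF, euclNorm_neg, Pi.neg_apply]; ring
    simp only [h2] at h1
    rw [integral_neg] at h1
    linarith
  have cub : ∀ F : Vec d → ℝ, (∀ t : ℝ, 0 < t → ∀ z, F (t • z) = t ^ 3 * F z) →
      ∫ z, W z * F z = 0 := by
    intro F hF
    obtain ⟨s, hs⟩ := radial hd (fun z => z j * F z) 4 (by
      intro t ht z; simp only [hF t ht, Pi.smul_apply, smul_eq_mul]; ring)
    have := hs γ
    simp only [← mul_assoc, ← hWγ] at this
    rw [this]
    have h2 : ∀ z : Vec d, γ (euclNorm z) * euclNorm z ^ 4 =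
        a * (K z * euclNorm z ^ 4) - b * (K z * euclNorm z ^ 6) := by
      intro z; simp only [γ, hκ]; ring
    simp only [h2]
    rw [integral_sub ((mom 4 (by norm_num)).const_mul _) ((mom 6 (by norm_num)).const_mul _),
      integral_const_mul, integral_const_mul, ← hm4, ← hm6, hab, mul_zero]
  have lin : ∀ L : Vec d →L[ℝ] ℝ, ∫ z, W z * L z = L (Pi.single j 1) := by
    intro L
    obtain ⟨s, hs⟩ := radial hd (fun z => z j * L z) 2 (by
      intro t ht z; simp only [map_smul, Pi.smul_apply, smul_eq_mul]; ring)
    have h1 := hs γ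
    simp only [← mul_assoc, ← hWγ] at h1
    have h2 : ∀ z : Vec d, γ (euclNorm z) * euclNorm z ^ 2 =
        a * (K z * euclNorm z ^ 2) - b * (K z * euclNorm z ^ 4) := by
      intro z; simp only [γ, hκ]; ring
    simp only [h2] at h1
    rw [integral_sub ((mom 2 (by norm_num)).const_mul _) ((mom 4 (by norm_num)).const_mul _),
      integral_const_mul, integral_const_mul, ← hm4, m2] at h1
    have h3 := hs κ
    simp only [← hκ, m2] at h3
    have h4 : ∀ z : Vec d, K z * (z j * L z) = ∑ i, L (Pi.single i 1) * (K z * z j * z i) := by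
      intro z
      have : L z = ∑ i, L (Pi.single i 1) * z i := by
        conv_lhs => rw [pi_eq_sum_univ' z, map_sum]
        refine Finset.sum_congr rfl fun i _ => ?_
        rw [map_smul, smul_eq_mul, mul_comm]
      rw [this, Finset.mul_sum, Finset.mul_sum]
      exact Finset.sum_congr rfl fun i _ => by ring
    simp only [h4] at h3
    rw [integral_finsetSum _ fun i _ => (hzz j i).const_mul _] at h3
    simp only [integral_const_mul, hK2] at h3
    simp at h3
    rw [h1, h3, ha]
    field_simp
    ring
  -- Taylor remainder
  obtain ⟨C, hC⟩ := hfb 4 le_rfl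
  let S : ℕ → Vec d → ℝ := fun n z => (f (x n + h n • z) - (f (x n) + h n * fderiv ℝ f (x n) z
      + h n ^ 2 / 2 * iteratedFDeriv ℝ 2 f (x n) (fun _ => z)
      + h n ^ 3 / 6 * iteratedFDeriv ℝ 3 f (x n) (fun _ => z))) / h n ^ 4
  have hS : ∀ n z, ∃ t ∈ Set.Ioo 0 (h n),
      S n z = iteratedFDeriv ℝ 4 f (x n + t • z) (fun _ => z) / 24 := by
    intro n z
    obtain ⟨t, ht, e⟩ := taylor4 f hf (x n) z (h n) (hh n)
    refine ⟨t, ht, ?_⟩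
    have := (hh n).ne'
    simp only [S]
    rw [e]
    field_simp
    ring
  have itc : ∀ (k : ℕ) (y : Vec d), Continuous fun z : Vec d => iteratedFDeriv ℝ k f y (fun _ => z) :=
    fun k y => (iteratedFDeriv ℝ k f y).cont.comp (by fun_prop)
  have itb : ∀ (k : ℕ) (y z : Vec d), |iteratedFDeriv ℝ k f y (fun _ => z)| ≤
      ‖iteratedFDeriv ℝ k f y‖ * euclNorm z ^ k := by
    intro k y z
    have := (iteratedFDeriv ℝ k f y).le_opNorm (fun _ => z)
    simp only [Finset.prod_const, Finset.card_univ, Fintype.card_fin, Real.norm_eq_abs] at this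
    refine this.trans ?_
    have := norm_le_euclNorm z
    gcongr
  have hfc := hf.continuous
  have Sc : ∀ n, Continuous (S n) := by
    intro n
    have h1 := itc 2 (x n)
    have h2 := itc 3 (x n)
    have h3 := (fderiv ℝ f (x n)).continuous
    simp only [S]
    fun_prop
  have Sb : ∀ n z, |S n z| ≤ C / 24 * euclNorm z ^ 4 := by
    intro n z
    obtain ⟨t, ht, e⟩ := hS n z
    rw [e, abs_div, abs_of_pos (by norm_num : (0:ℝ) < 24)]
    have h1 := itb 4 (x n + t • z) z
    have h2 := mul_le_mul_of_nonneg_right (hC (x n + t • z)) (pow_nonneg (euclNorm_nonneg z) 4)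
    linarith
  have Slim : ∀ z, Tendsto (fun n => S n z) atTop (𝓝 (iteratedFDeriv ℝ 4 f x_o (fun _ => z) / 24)) := by
    intro z
    choose t ht e using fun n => hS n z
    simp only [e]
    refine Tendsto.div_const ?_ _
    have t0 : Tendsto t atTop (𝓝 0) :=
      squeeze_zero (fun n => (ht n).1.le) (fun n => (ht n).2.le) hh0
    have t1 : Tendsto (fun n => x n + t n • z) atTop (𝓝 x_o) := by
      simpa using hx.add (t0.smul_const z)
    have c4 : Continuous (iteratedFDeriv ℝ 4 f) :=
      hf.continuous_iteratedFDeriv (by exact_mod_cast le_rfl)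
    have c5 : Continuous fun y => iteratedFDeriv ℝ 4 f y (fun _ => z) :=
      (ContinuousMultilinearMap.apply ℝ (fun _ : Fin 4 => Vec d) ℝ (fun _ => z)).continuous.comp c4
    exact (c5.tendsto x_o).comp t1
  have main : ∀ n, ((∫ z : Vec d, W z * f (x n + h n • z)) -
      h n * fderiv ℝ f (x n) (Pi.single j 1)) / h n ^ 4 = ∫ z, W z * S n z := by
    intro n
    have hn := (hh n).ne'
    have e : ∀ z, W z * f (x n + h n • z) = (((W z * f (x n) + h n * (W z * fderiv ℝ f (x n) z))
      + h n ^ 2 / 2 * (W z * iteratedFDeriv ℝ 2 f (x n) (fun _ => z)))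
      + h n ^ 3 / 6 * (W z * iteratedFDeriv ℝ 3 f (x n) (fun _ => z))) + h n ^ 4 * (W z * S n z) := by
      intro z
      simp only [S]
      field_simp
      ring
    have i0 : Integrable fun z => W z * f (x n) :=
      iW (fun _ => f (x n)) |f (x n)| 0 (by fun_prop) (by simp)
    have i1 : Integrable fun z => h n * (W z * fderiv ℝ f (x n) z) :=
      (iW (fun z => fderiv ℝ f (x n) z) ‖fderiv ℝ f (x n)‖ 1
        (fderiv ℝ f (x n)).continuous.aestronglyMeasurable (by
        intro z
        rw [pow_one]
        exact ((fderiv ℝ f (x n)).le_opNorm z).trans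
          (mul_le_mul_of_nonneg_left (norm_le_euclNorm z) (norm_nonneg _)))).const_mul _
    have i2 := (iW _ _ 2 (itc 2 (x n)).aestronglyMeasurable (itb 2 (x n))).const_mul (h n ^ 2 / 2)
    have i3 := (iW _ _ 3 (itc 3 (x n)).aestronglyMeasurable (itb 3 (x n))).const_mul (h n ^ 3 / 6)
    have i4 := (iW _ _ 4 (Sc n).aestronglyMeasurable (Sb n)).const_mul (h n ^ 4)
    have z0 := odd (fun _ => f (x n)) (fun _ => rfl)
    have z2 := odd (fun z => iteratedFDeriv ℝ 2 f (x n) (fun _ => z)) (by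
      intro z
      have := (iteratedFDeriv ℝ 2 f (x n)).map_smul_univ (fun _ => (-1 : ℝ)) (fun _ => z)
      simpa using this)
    have z3 := cub (fun z => iteratedFDeriv ℝ 3 f (x n) (fun _ => z)) (by
      intro t _ z
      have := (iteratedFDeriv ℝ 3 f (x n)).map_smul_univ (fun _ => t) (fun _ => z)
      simpa using this)
    have z1 := lin (fderiv ℝ f (x n))
    simp only [e]
    rw [integral_add (by exact ((i0.add i1).add i2).add i3) i4,
      integral_add (by exact (i0.add i1).add i2) i3,
      integral_add (by exact i0.add i1) i2, integral_add i0 i1, integral_const_mul, integral_const_mul,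
      integral_const_mul, integral_const_mul, z0, z1, z2, z3]
    field_simp
    ring
  change Tendsto (fun n => ((∫ z : Vec d, W z * f (x n + h n • z)) -
      h n * fderiv ℝ f (x n) (Pi.single j 1)) / h n ^ 4) atTop (𝓝 0)
  simp only [main]
  have zlim : ∫ z, W z * (iteratedFDeriv ℝ 4 f x_o (fun _ => z) / 24) = 0 := odd _ (by
    intro z
    have := (iteratedFDeriv ℝ 4 f x_o).map_smul_univ (fun _ => (-1 : ℝ)) (fun _ => z)
    have h2 : iteratedFDeriv ℝ 4 f x_o (fun _ => -z) = iteratedFDeriv ℝ 4 f x_o (fun _ => z) := by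
      simpa [show (-1 : ℝ) ^ 4 = 1 by norm_num] using this
    rw [h2])
  rw [← zlim]
  refine tendsto_integral_of_dominated_convergence
    (fun z => ‖W z * (C / 24 * euclNorm z ^ 4)‖) (fun n => ?_) ?_ (fun n => ?_) ?_
  · exact hWm.aestronglyMeasurable.mul (Sc n).aestronglyMeasurable
  · refine (iW (fun z => C / 24 * euclNorm z ^ 4) (C / 24) 4 (by fun_prop) fun z => ?_).norm
    exact (abs_of_nonneg ((abs_nonneg _).trans (Sb 0 z))).le
  · refine Eventually.of_forall fun z => ?_
    change ‖W z * S n z‖ ≤ ‖W z * (C / 24 * euclNorm z ^ 4)‖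
    rw [norm_mul (W z), norm_mul (W z)]
    exact mul_le_mul_of_nonneg_left ((Sb n z).trans (le_abs_self _)) (norm_nonneg _)
  · exact Eventually.of_forall fun z => (Slim z).const_mul _
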